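/- Let (A,m) be a Noetherian local ring, a an ideal of A, and M a finitely generated A-module. Then a·Hom_A(M, a^n) = Hom_A(M, a^{n+1}) for all n ≫ 0 (here Hom_A(M, a^n) is identified with the submodule {f ∈ Hom_A(M,A) : f(M) ⊆ a^n} of Hom_A(M,A)). -/

import Mathlib

set_option synthInstance.maxHeartbeats 1000000
set_option maxHeartbeats 1000000
set_option linter.unusedVariables false

noncomputable section

open Polynomial IsLocalRing

/-- The dual filtration on `M* = Hom_A(M, A)`:
`M*_n = Hom_A(M, aⁿ) = {f : M →ₗ[A] A | f(M) ⊆ aⁿ}`. -/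
def dualFiltration {A : Type} [CommRing A] (a : Ideal A)
    (M : Type) [AddCommGroup M] [Module A M] (n : ℕ) :
    Submodule A (M →ₗ[A] A) where
  carrier := {f | ∀ m, f m ∈ a ^ n}
  add_mem' := fun hf hg m => (a ^ n).add_mem (hf m) (hg m)
  zero_mem' := fun m => by simp
  smul_mem' := fun c f hf => by
    intro m
    simpa [smul_eq_mul] using Ideal.mul_mem_left _ c (hf m)

/-- The dual filtration indexed by `ℤ` (with `aⁿ = A` for `n ≤ 0`). -/
def dualFiltrationZ {A : Type} [CommRing A] (a : Ideal A)
    (M : Type) [AddCommGroup M] [Module A M] (n : ℤ) :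
    Submodule A (M →ₗ[A] A) :=
  dualFiltration a M n.toNat

/-- Let `(A, m)` be a Noetherian local ring, `a` an ideal of `A`, and `M` a finitely
generated `A`-module. Then `a·Hom_A(M, aⁿ) = Hom_A(M, aⁿ⁺¹)` for all `n ≫ 0`, where
`Hom_A(M, aⁿ)` is identified with the submodule `{f ∈ Hom_A(M, A) | f(M) ⊆ aⁿ}`. -/
theorem dual_filtration_stable
    (A : Type) [CommRing A] [IsLocalRing A] [IsNoetherianRing A] (a : Ideal A)
    (M : Type) [AddCommGroup M] [Module A M] [Module.Finite A M] :
    ∃ N : ℕ, ∀ n : ℕ, N ≤ n → a • dualFiltration a M n = dualFiltration a M (n + 1) := by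
  classical
  obtain ⟨k, s, hs⟩ := Module.Finite.exists_fin (R := A) (M := M)
  let φ : (M →ₗ[A] A) →ₗ[A] (Fin k → A) :=
    { toFun := fun f i => f (s i)
      map_add' := fun f g => rfl
      map_smul' := fun c f => rfl }
  have hφ : Function.Injective φ := by
    intro f g h
    apply LinearMap.ext_on_range hs
    intro i
    exact congrFun h i
  have hmem : ∀ (I : Ideal A) (x : Fin k → A),
      x ∈ I • (⊤ : Submodule A (Fin k → A)) ↔ ∀ i, x i ∈ I := by
    intro I x
    constructor
    · intro hx i
      refine Submodule.smul_induction_on hx ?_ ?_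
      · intro r hr y _
        exact I.mul_mem_right _ hr
      · intro y z hy hz
        exact I.add_mem hy hz
    · intro hx
      rw [pi_eq_sum_univ x]
      exact Submodule.sum_mem _ fun i _ => Submodule.smul_mem_smul (hx i) trivial
  have hmap : ∀ n, (dualFiltration a M n).map φ =
      a ^ n • (⊤ : Submodule A (Fin k → A)) ⊓ LinearMap.range φ := by
    intro n
    ext x
    constructor
    · rintro ⟨f, hf, rfl⟩
      exact ⟨(hmem _ _).2 fun i => hf (s i), ⟨f, rfl⟩⟩
    · rintro ⟨hx, f, rfl⟩
      refine ⟨f, ?_, rfl⟩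
      have h1 : Submodule.span A (Set.range s) ≤ Submodule.comap f (a ^ n) := by
        rw [Submodule.span_le]
        rintro _ ⟨i, rfl⟩
        exact (hmem _ _).1 hx i
      intro m
      exact h1 (hs ▸ Submodule.mem_top)
  obtain ⟨N, hN⟩ := Ideal.exists_pow_inf_eq_pow_smul a (LinearMap.range φ)
  refine ⟨N, fun n hn => ?_⟩
  apply Submodule.map_injective_of_injective hφ
  rw [Submodule.map_smul'', hmap, hmap, hN n hn, hN (n + 1) (by omega), ← Submodule.mul_smul,
    ← pow_succ', Nat.sub_add_comm hn]
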